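/- Let P : Cᵒᵖ → Pos be a Gödel doctrine and let P' be its subdoctrine of quantifier-free predicates. For an object I of C, let Dial(P')(I) be the preorder whose elements are triples (U, X, α) with U, X objects of C and α a quantifier-free predicate in P(I × U × X), and where (U, X, α) ≤ (V, Y, β) if and only if there exist arrows f₀ : I × U → V and f₁ : I × U × Y → X such that the reindexing of α along (i,u,y) ↦ (i, u, f₁(i,u,y)) is ≤ the reindexing of β along (i,u,y) ↦ (i, f₀(i,u), y) in P(I × U × Y). Then the assignment (U, X, α) ↦ ∃_π ∀_{π'} α (with π' : I × U × X → I × U and π : I × U → I the projections) defines an equivalence of preorders between Dial(P')(I) and P(I): it is monotone, order-reflecting ((U,X,α) ≤ (V,Y,β) if and only if ∃_π ∀_{π'} α ≤ ∃_ρ ∀_{ρ'} β in P(I)), and surjective onto P(I). -/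

import Mathlib

open CategoryTheory MonoidalCategory CartesianMonoidalCategory

universe v u

/-- A doctrine: a (contravariant) functor from a category `C` with finite products
to the category of posets and monotone maps, presented concretely. -/
structure Doctrine (C : Type u) [Category.{v} C] [CartesianMonoidalCategory C] where
  obj : C → Type*
  ord : ∀ A : C, PartialOrder (obj A)
  map : ∀ {A B : C}, (A ⟶ B) → obj B → obj A
  map_mono : ∀ {A B : C} (f : A ⟶ B), Monotone (map f)
  map_id : ∀ {A : C} (α : obj A), map (𝟙 A) α = α
  map_comp : ∀ {A B D : C} (f : A ⟶ B) (g : B ⟶ D) (α : obj D),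
    map (f ≫ g) α = map f (map g α)

attribute [instance] Doctrine.ord

/-- A doctrine that is both existential and universal: reindexing along the two
product projections has both adjoints, satisfying the Beck–Chevalley condition. -/
structure EUDoctrine (C : Type u) [Category.{v} C] [CartesianMonoidalCategory C]
    extends Doctrine C where
  ex1 : ∀ {A B : C}, obj (A ⊗ B) → obj A
  ex1_gc : ∀ (A B : C), GaloisConnection (ex1 (A := A) (B := B)) (map (fst A B))
  ex2 : ∀ {A B : C}, obj (A ⊗ B) → obj B
  ex2_gc : ∀ (A B : C), GaloisConnection (ex2 (A := A) (B := B)) (map (snd A B))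
  ex1_bc : ∀ {A A' B : C} (f : A' ⟶ A) (β : obj (A ⊗ B)),
    ex1 (map (f ⊗ₘ 𝟙 B) β) = map f (ex1 β)
  ex2_bc : ∀ {A B B' : C} (f : B' ⟶ B) (β : obj (A ⊗ B)),
    ex2 (map (𝟙 A ⊗ₘ f) β) = map f (ex2 β)
  all1 : ∀ {A B : C}, obj (A ⊗ B) → obj A
  all1_gc : ∀ (A B : C), GaloisConnection (map (fst A B)) (all1 (A := A) (B := B))
  all2 : ∀ {A B : C}, obj (A ⊗ B) → obj B
  all2_gc : ∀ (A B : C), GaloisConnection (map (snd A B)) (all2 (A := A) (B := B))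
  all1_bc : ∀ {A A' B : C} (f : A' ⟶ A) (β : obj (A ⊗ B)),
    all1 (map (f ⊗ₘ 𝟙 B) β) = map f (all1 β)
  all2_bc : ∀ {A B B' : C} (f : B' ⟶ B) (β : obj (A ⊗ B)),
    all2 (map (𝟙 A ⊗ₘ f) β) = map f (all2 β)

namespace EUDoctrine

variable {C : Type u} [Category.{v} C] [CartesianMonoidalCategory C] (D : EUDoctrine C)

/-- `α` is an existential splitting: whenever `α ≤ ∃_{π_A} β` there is `g : A ⟶ B`
with `α ≤ P_⟨1_A, g⟩ β`. -/
def ExSplitting {A : C} (α : D.obj A) : Prop :=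
  ∀ (B : C) (β : D.obj (A ⊗ B)), α ≤ D.ex1 β →
    ∃ g : A ⟶ B, α ≤ D.map (lift (𝟙 A) g) β

/-- `α` is existential-free: every reindexing of `α` is an existential splitting. -/
def ExFree {I : C} (α : D.obj I) : Prop :=
  ∀ (A : C) (f : A ⟶ I), D.ExSplitting (D.map f α)

/-- `α` is a universal splitting in the subdoctrine of existential-free predicates. -/
def UnivSplittingSub {A : C} (α : D.obj A) : Prop :=
  ∀ (B : C) (β : D.obj (A ⊗ B)), D.ExFree β → D.all1 β ≤ α →
    ∃ g : A ⟶ B, D.map (lift (𝟙 A) g) β ≤ α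

/-- `α` is universal-free in the subdoctrine of existential-free predicates. -/
def UnivFreeSub {I : C} (α : D.obj I) : Prop :=
  ∀ (A : C) (f : A ⟶ I), D.UnivSplittingSub (D.map f α)

/-- `α` is quantifier-free: existential-free and universal-free in the subdoctrine of
existential-free predicates. -/
def QFree {I : C} (α : D.obj I) : Prop := D.ExFree α ∧ D.UnivFreeSub α

end EUDoctrine

/-- A Gödel doctrine. -/
structure GoedelDoctrine (C : Type u) [Category.{v} C] [CartesianMonoidalCategory C]
    [MonoidalClosed C] extends EUDoctrine C where
  enough_exFree : ∀ (I : C) (α : obj I), ∃ (A : C) (β : obj (I ⊗ A)),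
    toEUDoctrine.ExFree β ∧ α = ex1 β
  exFree_all1 : ∀ {A B : C} (α : obj (A ⊗ B)),
    toEUDoctrine.ExFree α → toEUDoctrine.ExFree (all1 α)
  exFree_all2 : ∀ {A B : C} (α : obj (A ⊗ B)),
    toEUDoctrine.ExFree α → toEUDoctrine.ExFree (all2 α)
  enough_univFree : ∀ (I : C) (α : obj I), toEUDoctrine.ExFree α →
    ∃ (A : C) (β : obj (I ⊗ A)), toEUDoctrine.ExFree β ∧ toEUDoctrine.UnivFreeSub β ∧
      α = all1 β

/-!
Along a projection, an existential splitting turns an inequality into an existential quantifier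
into the choice of a witness, and a universal splitting turns an inequality out of a universal
quantifier into the choice of a counterexample. To compare `∃ ∀ α` with `∃ ∀ β`, the outer `∃`
on the left is removed by adjunction, the `∃` on the right by a witness `f₀` (as `∀ α` is a
splitting), the `∀` on the right by adjunction, and the `∀` on the left by a counterexample `f₁`
(as `β` is universal-free). Every step is an equivalence, so `f₀` and `f₁` exist exactly when the
inequality holds.
-/

namespace EUDoctrine

variable {C : Type u} [Category.{v} C] [CartesianMonoidalCategory C] {D : EUDoctrine C}

theorem ExFree.map {A B : C} {α : D.obj B} (hα : D.ExFree α) (f : A ⟶ B) :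
    D.ExFree (D.map f α) := by
  intro E g
  simpa only [D.map_comp] using hα E (g ≫ f)

theorem ExFree.exSplitting {A : C} {α : D.obj A} (hα : D.ExFree α) : D.ExSplitting α := by
  simpa only [D.map_id] using hα A (𝟙 A)

theorem map_lift_id_map_tensorHom {A B E : C} (f : A ⟶ B) (g : A ⟶ E) (β : D.obj (B ⊗ E)) :
    D.map (lift (𝟙 A) g) (D.map (f ⊗ₘ 𝟙 E) β) = D.map (lift f g) β := by
  rw [← D.map_comp, lift_map, Category.id_comp, Category.comp_id]

theorem map_lift_le_map_ex1 {A B E : C} (f : A ⟶ B) (g : A ⟶ E) (β : D.obj (B ⊗ E)) :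
    D.map (lift f g) β ≤ D.map f (D.ex1 β) :=
  calc D.map (lift f g) β
    _ ≤ D.map (lift f g) (D.map (fst B E) (D.ex1 β)) :=
      D.map_mono _ ((D.ex1_gc B E).le_u_l β)
    _ = D.map f (D.ex1 β) := by rw [← D.map_comp, lift_fst]

theorem map_all1_le_map_lift {A B E : C} (f : A ⟶ B) (g : A ⟶ E) (β : D.obj (B ⊗ E)) :
    D.map f (D.all1 β) ≤ D.map (lift f g) β :=
  calc D.map f (D.all1 β)
    _ = D.map (lift f g) (D.map (fst B E) (D.all1 β)) := by rw [← D.map_comp, lift_fst]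
    _ ≤ D.map (lift f g) β := D.map_mono _ ((D.all1_gc B E).l_u_le β)

theorem ExSplitting.le_map_ex1_iff {A B E : C} {α : D.obj A} (hα : D.ExSplitting α)
    (f : A ⟶ B) (β : D.obj (B ⊗ E)) :
    α ≤ D.map f (D.ex1 β) ↔ ∃ g : A ⟶ E, α ≤ D.map (lift f g) β := by
  refine ⟨fun h ↦ ?_, fun ⟨g, hg⟩ ↦ hg.trans (map_lift_le_map_ex1 f g β)⟩
  rw [← D.ex1_bc] at h
  simpa only [map_lift_id_map_tensorHom] using hα E _ h

theorem UnivSplittingSub.map_all1_le_iff {A B E : C} {α : D.obj A}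
    (hα : D.UnivSplittingSub α) (f : A ⟶ B) {β : D.obj (B ⊗ E)} (hβ : D.ExFree β) :
    D.map f (D.all1 β) ≤ α ↔ ∃ g : A ⟶ E, D.map (lift f g) β ≤ α := by
  refine ⟨fun h ↦ ?_, fun ⟨g, hg⟩ ↦ (map_all1_le_map_lift f g β).trans hg⟩
  rw [← D.all1_bc] at h
  simpa only [map_lift_id_map_tensorHom] using hα E _ (hβ.map _) h

theorem le_map_all1_iff {A B E : C} (f : A ⟶ B) (α : D.obj A) (β : D.obj (B ⊗ E)) :
    α ≤ D.map f (D.all1 β) ↔ D.map (fst A E) α ≤ D.map (f ⊗ₘ 𝟙 E) β := by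
  rw [← D.all1_bc]
  exact (D.all1_gc A E).le_iff_le.symm

theorem ex1_all1_le_ex1_all1_iff {I U X V Y : C} {α : D.obj ((I ⊗ U) ⊗ X)}
    {β : D.obj ((I ⊗ V) ⊗ Y)} (hα : D.ExFree α) (hα' : D.ExSplitting (D.all1 α))
    (hβ : D.UnivFreeSub β) :
    D.ex1 (D.all1 α) ≤ D.ex1 (D.all1 β) ↔
      ∃ (f₀ : I ⊗ U ⟶ V) (f₁ : (I ⊗ U) ⊗ Y ⟶ X),
        D.map (lift (fst (I ⊗ U) Y) f₁) α ≤ D.map (lift (fst I U) f₀ ⊗ₘ 𝟙 Y) β :=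
  calc D.ex1 (D.all1 α) ≤ D.ex1 (D.all1 β)
    _ ↔ D.all1 α ≤ D.map (fst I U) (D.ex1 (D.all1 β)) := (D.ex1_gc I U).le_iff_le
    _ ↔ ∃ f₀ : I ⊗ U ⟶ V, D.all1 α ≤ D.map (lift (fst I U) f₀) (D.all1 β) :=
      hα'.le_map_ex1_iff _ _
    _ ↔ ∃ f₀ : I ⊗ U ⟶ V,
          D.map (fst (I ⊗ U) Y) (D.all1 α) ≤ D.map (lift (fst I U) f₀ ⊗ₘ 𝟙 Y) β :=
      exists_congr fun _ ↦ le_map_all1_iff _ _ _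
    _ ↔ _ := exists_congr fun _ ↦ (hβ _ _).map_all1_le_iff _ hα

end EUDoctrine

theorem GoedelDoctrine.dialectica_completion_general {C : Type u} [Category.{v} C]
    [CartesianMonoidalCategory C] (D : EUDoctrine C)
    (enough_exFree : ∀ (I : C) (γ : D.obj I), ∃ (U : C) (β : D.obj (I ⊗ U)),
      D.ExFree β ∧ γ = D.ex1 β)
    (exFree_all1 : ∀ {A B : C} (α : D.obj (A ⊗ B)), D.ExFree α → D.ExFree (D.all1 α))
    (enough_univFree : ∀ (A : C) (β : D.obj A), D.ExFree β →
      ∃ (X : C) (α : D.obj (A ⊗ X)), D.ExFree α ∧ D.UnivFreeSub α ∧ β = D.all1 α)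
    (I : C) :
    (∀ (U X V Y : C) (α : D.obj ((I ⊗ U) ⊗ X)) (β : D.obj ((I ⊗ V) ⊗ Y)),
      D.ExFree α → D.UnivFreeSub β →
        ((∃ (f₀ : I ⊗ U ⟶ V) (f₁ : (I ⊗ U) ⊗ Y ⟶ X),
            D.map (lift (fst (I ⊗ U) Y) f₁) α ≤ D.map (lift (fst I U) f₀ ⊗ₘ 𝟙 Y) β) ↔
          D.ex1 (D.all1 α) ≤ D.ex1 (D.all1 β))) ∧
    (∀ γ : D.obj I, ∃ (U X : C) (α : D.obj ((I ⊗ U) ⊗ X)),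
      D.QFree α ∧ γ = D.ex1 (D.all1 α)) := by
  refine ⟨fun U X V Y α β hα hβ ↦ ?_, fun γ ↦ ?_⟩
  · exact (EUDoctrine.ex1_all1_le_ex1_all1_iff hα (exFree_all1 α hα).exSplitting hβ).symm
  · obtain ⟨U, β, hβ, rfl⟩ := enough_exFree I γ
    obtain ⟨X, α, hα, hα', rfl⟩ := enough_univFree (I ⊗ U) β hβ
    exact ⟨U, X, α, ⟨hα, hα'⟩, rfl⟩

/-- **Every Gödel doctrine is a Dialectica completion** (Theorem 4): for every object `I`, the
assignment `(U, X, α) ↦ ∃_π ∀_{π'} α` from the Dialectica preorder `Dial(P')(I)` of triples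
`(U, X, α)` (with `α` a quantifier-free predicate in `P(I × U × X)`, ordered by the existence of
witness/counterexample morphisms `f₀, f₁`) to `P(I)` is monotone, order-reflecting and
surjective, hence an equivalence of preorders. -/
theorem GoedelDoctrine.dialectica_completion {C : Type u} [Category.{v} C]
    [CartesianMonoidalCategory C] [MonoidalClosed C] (D : GoedelDoctrine C) (I : C) :
    -- monotonicity and order-reflection: the Dialectica order on triples corresponds
    -- exactly to the order of the images in `P(I)`
    (∀ (U X V Y : C) (α : D.obj ((I ⊗ U) ⊗ X)) (β : D.obj ((I ⊗ V) ⊗ Y)),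
      D.toEUDoctrine.QFree α → D.toEUDoctrine.QFree β →
        ((∃ (f₀ : I ⊗ U ⟶ V) (f₁ : (I ⊗ U) ⊗ Y ⟶ X),
            D.map (lift (fst (I ⊗ U) Y) f₁) α ≤ D.map (lift (fst I U) f₀ ⊗ₘ 𝟙 Y) β) ↔
          D.ex1 (D.all1 α) ≤ D.ex1 (D.all1 β))) ∧
    -- surjectivity onto `P(I)`
    (∀ γ : D.obj I, ∃ (U X : C) (α : D.obj ((I ⊗ U) ⊗ X)),
      D.toEUDoctrine.QFree α ∧ γ = D.ex1 (D.all1 α)) := by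
  obtain ⟨order_iff, surjective⟩ := dialectica_completion_general D.toEUDoctrine
    D.enough_exFree D.exFree_all1 D.enough_univFree I
  exact ⟨fun U X V Y α β hα hβ ↦ order_iff U X V Y α β hα.1 hβ.2, surjective⟩
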